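/- There is an absolute constant K such that the following holds in the Line setting. Assume u > (p+2)·log₂ v + log₂ q and let h := s/(u − (p+2)·log₂ v − log₂ q) + 1. For every deterministic MPC algorithm with m machines, local memory s bits, and at most q oracle queries per machine per round, and every integer R with 1 ≤ R ≤ w/p − 1, the probability over uniformly random (RO, X) that some machine queries the final Line string e_w during the first R rounds (i.e., e_w ∈ Q^{(≤R−1)}) is at most K·R·m·((h/v)^p + w·q·v^p·2^(−u) + w·2^(−(u − (p+2)·log₂ v − log₂ q))). This is the quantitative content of Lemma 3.2 of the paper: for the parameter setting w = T, u = n/3, v = S/u, s ≤ S/c (c a sufficiently large universal constant), with n ≤ S ≤ T ≤ 2^(n^{1/4}), m ≤ 2^(n^{1/4}) and q ≤ 2^(n/4), it implies that any deterministic MPC algorithm computing Line^RO_{n,w,u,v} with probability at least 1/3 over uniform (RO, X) must run for at least w/(log₂ w)² = Ω̃(T) rounds. -/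

import Mathlib

/-- Probability of `P` under the uniform distribution on a finite type `Ω`. -/
noncomputable def unifProb {Ω : Type} [Fintype Ω] (P : Ω → Prop) : ℝ :=
  (Set.ncard {ω : Ω | P ω} : ℝ) / (Fintype.card Ω : ℝ)
/-- Bit strings of length `k`. -/
abbrev Bits (k : ℕ) := Fin k → Bool

/-- The `j`-th bit (`0`-based) of a bit string, `false` out of range. -/
def bitAt {k : ℕ} (y : Bits k) (j : ℕ) : Bool := if h : j < k then y ⟨j, h⟩ else false

/-- The `i`-th block (`0`-based) of the input `X = (x_1, …, x_v)`. -/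
def getX {u v : ℕ} (X : Fin v → Bits u) (i : ℕ) : Bits u :=
  if h : i < v then X ⟨i, h⟩ else fun _ => false
/-- The integer encoded by the first `κ` bits of a bit string. -/
def natOf {n : ℕ} (y : Bits n) (κ : ℕ) : ℕ :=
  ∑ j ∈ Finset.range κ, if bitAt y j then 2 ^ j else 0

/-- `⟨i, x, ρ⟩` : the `n`-bit concatenation of the `W`-bit binary encoding of `i`, the
`u`-bit strings `x` and `ρ`, and trailing zeros. -/
def lineStr (n W u : ℕ) (i : ℕ) (x ρ : Bits u) : Bits n := fun j =>
  if (j : ℕ) < W then Nat.testBit i (j : ℕ)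
  else if (j : ℕ) < W + u then bitAt x ((j : ℕ) - W)
  else if (j : ℕ) < W + 2 * u then bitAt ρ ((j : ℕ) - W - u)
  else false

/-- `lineChain n u v W κ RO X k = (ℓ_{k+1} − 1, r_{k+1})` : the Line chain, with the
pointer stored `0`-based.  `ℓ_1 = 1, r_1 = 0^u`; `e_i = ⟨i, x_{ℓ_i}, r_i⟩`;
`ℓ_{i+1} − 1` is the integer encoded by the first `κ` bits of `RO(e_i)` (reduced mod
`v`, which is the identity when `v = 2^κ`), and `r_{i+1}` is the `u` bits of `RO(e_i)`
in positions `κ+1, …, κ+u`. -/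
def lineChain (n u v W κ : ℕ) (RO : Bits n → Bits n) (X : Fin v → Bits u) :
    ℕ → ℕ × Bits u
  | 0 => (0, fun _ => false)
  | k + 1 =>
    let c := lineChain n u v W κ RO X k
    let e := lineStr n W u (k + 1) (getX X (c.1 % v)) c.2
    (natOf (RO e) κ % v, fun j => bitAt (RO e) (κ + (j : ℕ)))

/-- `lineE n u v W κ RO X k` is the paper's `e_{k+1}`. -/
def lineE (n u v W κ : ℕ) (RO : Bits n → Bits n) (X : Fin v → Bits u) (k : ℕ) : Bits n :=
  lineStr n W u (k + 1) (getX X ((lineChain n u v W κ RO X k).1 % v))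
    (lineChain n u v W κ RO X k).2

/-- `branchE n u v W κ RO X j a c` is the branch entry `e'_c` determined by the paper's
(1-based) index `j` and the (0-based) sequence `a` (only `a 1, …, a c` matter):
`e'_0 = ⟨j+1, x_{ℓ_{j+1}}, r_{j+1}⟩ = e_{j+1}`, and for `c ≥ 1`,
`e'_c = ⟨j+c+1, x_{a_c}, ρ_c⟩` where `ρ_c` is the `u` bits of `RO(e'_{c−1})` in
positions `κ+1, …, κ+u`. -/
def branchE (n u v W κ : ℕ) (RO : Bits n → Bits n) (X : Fin v → Bits u) (j : ℕ)
    (a : ℕ → Fin v) : ℕ → Bits n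
  | 0 => lineE n u v W κ RO X j
  | c + 1 => lineStr n W u (j + c + 2) (X (a (c + 1)))
      (fun t => bitAt (RO (branchE n u v W κ RO X j a c)) (κ + (t : ℕ)))
/-- Answers to the first `t` queries of a deterministic adaptive oracle algorithm whose
next-query function is `f`. -/
def advAns (n : ℕ) (RO : Bits n → Bits n) (f : List (Bits n) → Bits n) : ℕ → List (Bits n)
  | 0 => []
  | t + 1 => advAns n RO f t ++ [RO (f (advAns n RO f t))]

/-- The `(t+1)`-st query (so the paper's `q_{t+1}`) of the adaptive algorithm `f`. -/
def advQ (n : ℕ) (RO : Bits n → Bits n) (f : List (Bits n) → Bits n) (t : ℕ) : Bits n :=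
  f (advAns n RO f t)
/-- A deterministic MPC algorithm with `m` machines, local memory `s` bits, at most `q`
adaptive oracle queries (to an oracle on `n`-bit strings) per machine per round, on
inputs from `I`.  `init` splits the input into the machines' initial states, `qf k i` is
machine `i`'s next-query function in round `k` (from its state and the answers received
so far in the round), and `cf k i` produces the messages machine `i` sends to each
machine at the end of round `k`; each machine receives at most `s` bits per round. -/
structure MPC (n s q m : ℕ) (I : Type) where
  init : I → Fin m → Bits s
  qf : ℕ → Fin m → Bits s → List (Bits n) → Bits n
  cf : ℕ → Fin m → Bits s → List (Bits n) → Fin m → List Bool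
  comm_le : ∀ (k : ℕ) (st : Fin m → Bits s) (ans : Fin m → List (Bits n)) (j : Fin m),
    (∑ i : Fin m, (cf k i (st i) (ans i) j).length) ≤ s

/-- Pad/truncate a list of booleans to an `s`-bit state. -/
def listToBits (s : ℕ) (L : List Bool) : Bits s := fun b => L.getD (b : ℕ) false

/-- `mstate A RO X k i` : the state of machine `i` at the beginning of round `k` when the
MPC algorithm `A` is run with oracle `RO` on input `X`. -/
def mstate {n s q m : ℕ} {I : Type} (A : MPC n s q m I) (RO : Bits n → Bits n) (X : I) :
    ℕ → Fin m → Bits s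
  | 0 => A.init X
  | k + 1 => fun j =>
      listToBits s ((List.ofFn (fun i : Fin m =>
        A.cf k i (mstate A RO X k i)
          (advAns n RO (A.qf k i (mstate A RO X k i)) q) j)).flatten)

/-- The `(t+1)`-st oracle query of machine `i` in round `k` of the run of `A` with
oracle `RO` on input `X`. -/
def mquery {n s q m : ℕ} {I : Type} (A : MPC n s q m I) (RO : Bits n → Bits n) (X : I)
    (k : ℕ) (i : Fin m) (t : ℕ) : Bits n :=
  advQ n RO (A.qf k i (mstate A RO X k i)) t

/-!
A machine can query the chain string `e_{j+1}` without `e_j` having been queried before only by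
guessing the `r`-part of `RO(e_j)`, which has probability `2^(-u)`. Without such skips, reaching
`e_w` in fewer than `w / p` rounds forces some machine to walk along `p` new strings of the chain
within a single round, starting from an `s`-bit state that is independent of the oracle on them.

The pointers met on this walk may therefore be exchanged for a sequence `a` drawn independently of
the oracle, the input and the state: the machine then walks along the branch prescribed by `a`, on
an oracle reprogrammed to point along it. If the branches it can walk along use more than `t`
blocks of the input altogether, then more than `t` blocks are predicted by the state together with,
for each block, a branch, a query number and the position of the block. A union bound over the
states and these data shows that this is unlikely. Otherwise all entries of `a` lie in a set of `t`
blocks, which has probability at most `(t / v) ^ p`.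
-/

section UniformProbability

variable {Ω Ω' α ι : Type} [Fintype Ω] [Fintype Ω'] [Fintype α]

theorem unifProb_mono {P Q : Ω → Prop} (h : ∀ ω, P ω → Q ω) : unifProb P ≤ unifProb Q := by
  unfold unifProb
  gcongr
  · exact Set.toFinite _
  · exact h _

theorem unifProb_le_one (P : Ω → Prop) : unifProb P ≤ 1 := by
  refine div_le_one_of_le₀ ?_ (Nat.cast_nonneg _)
  rw [← Nat.card_eq_fintype_card]
  exact_mod_cast Set.ncard_le_card _

theorem unifProb_mul_card (P : Ω → Prop) :
    unifProb P * Fintype.card Ω = Set.ncard {ω | P ω} := by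
  cases isEmpty_or_nonempty Ω
  · simp [unifProb, Set.eq_empty_of_isEmpty]
  · exact div_mul_cancel₀ _ (by positivity)

theorem unifProb_eq_sum_div_card (P : Ω → Prop) [DecidablePred P] :
    unifProb P = (∑ ω, if P ω then (1 : ℝ) else 0) / Fintype.card Ω := by
  rw [unifProb, Set.ncard_eq_toFinset_card', Finset.sum_boole, Set.toFinset_ofPred]

theorem unifProb_or_le (P Q : Ω → Prop) :
    unifProb (fun ω => P ω ∨ Q ω) ≤ unifProb P + unifProb Q := by
  unfold unifProb
  rw [← add_div]
  gcongr
  exact_mod_cast Set.ncard_union_le {ω | P ω} {ω | Q ω}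

theorem unifProb_exists_le [Fintype ι] {P : ι → Ω → Prop} {b : ℝ}
    (h : ∀ i, unifProb (P i) ≤ b) : unifProb (fun ω => ∃ i, P i ω) ≤ Fintype.card ι * b := by
  have hsub : {ω | ∃ i, P i ω} = ⋃ i ∈ (Finset.univ : Finset ι), {ω | P i ω} := by
    ext; simp
  calc unifProb (fun ω => ∃ i, P i ω) ≤ ∑ i, unifProb (P i) := by
        unfold unifProb
        rw [← Finset.sum_div, hsub]
        gcongr
        exact_mod_cast Finset.set_ncard_biUnion_le _ _
    _ ≤ Fintype.card ι * b := by
        rw [← nsmul_eq_mul]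
        exact Finset.sum_le_card_nsmul _ _ _ fun i _ => h i

theorem unifProb_exists_lt_le {N : ℕ} {P : ℕ → Ω → Prop} {b : ℝ}
    (h : ∀ k < N, unifProb (P k) ≤ b) : unifProb (fun ω => ∃ k < N, P k ω) ≤ N * b := by
  simpa only [Fin.exists_iff, exists_prop, Fintype.card_fin] using
    unifProb_exists_le fun k : Fin N => h k k.isLt

theorem unifProb_prod (P : Ω → α → Prop) :
    unifProb (fun z : Ω × α => P z.1 z.2) = (∑ ω, unifProb (P ω)) / Fintype.card Ω := by
  classical
  simp only [unifProb_eq_sum_div_card, Fintype.sum_prod_type, Fintype.card_prod, Nat.cast_mul,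
    ← Finset.sum_div]
  rw [div_div, mul_comm]

theorem unifProb_prod_le_add {P : Ω → α → Prop} {B : Ω → Prop} {c : ℝ} (hc : 0 ≤ c)
    (h : ∀ ω, ¬B ω → unifProb (P ω) ≤ c) :
    unifProb (fun z : Ω × α => P z.1 z.2) ≤ unifProb B + c := by
  classical
  cases isEmpty_or_nonempty Ω
  · simpa [unifProb] using hc
  have hΩ : (Fintype.card Ω : ℝ) ≠ 0 := by positivity
  have hpoint : ∀ ω, unifProb (P ω) ≤ (if B ω then 1 else 0) + c := fun ω => by
    split_ifs with hB
    · linarith [unifProb_le_one (P ω)]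
    · simpa using h ω hB
  calc unifProb (fun z : Ω × α => P z.1 z.2)
      ≤ (∑ ω, ((if B ω then (1 : ℝ) else 0) + c)) / Fintype.card Ω := by
        rw [unifProb_prod]
        gcongr with ω
        exact hpoint ω
    _ = unifProb B + c := by
        rw [Finset.sum_add_distrib, add_div, ← unifProb_eq_sum_div_card, Finset.sum_const,
          Finset.card_univ, nsmul_eq_mul, mul_div_cancel_left₀ _ hΩ]

theorem unifProb_prod_le {P : Ω → α → Prop} {c : ℝ} (hc : 0 ≤ c)
    (h : ∀ ω, unifProb (P ω) ≤ c) : unifProb (fun z : Ω × α => P z.1 z.2) ≤ c := by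
  simpa [unifProb] using unifProb_prod_le_add (B := fun _ => False) hc fun ω _ => h ω

theorem unifProb_mul_card_le_of_leftInverse {P : Ω → Prop} {Q : Ω' → Prop} (F : Ω × α → Ω')
    (G : Ω' → Ω × α) (hQ : ∀ ω a, P ω → Q (F (ω, a)))
    (hG : ∀ ω a, P ω → G (F (ω, a)) = (ω, a)) :
    unifProb P * (Fintype.card Ω * Fintype.card α) ≤ unifProb Q * Fintype.card Ω' := by
  have hmaps : ∀ z ∈ {ω | P ω} ×ˢ (Set.univ : Set α), F z ∈ {ω | Q ω} :=
    fun z hz => hQ z.1 z.2 hz.1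
  have hinj : Set.InjOn F ({ω | P ω} ×ˢ (Set.univ : Set α)) :=
    Set.LeftInvOn.injOn (f₁' := G) fun z hz => hG z.1 z.2 hz.1
  have hcard := Set.ncard_le_ncard_of_injOn F hmaps hinj (Set.toFinite _)
  rw [Set.ncard_prod, Set.ncard_univ, Nat.card_eq_fintype_card] at hcard
  rw [← mul_assoc, unifProb_mul_card, unifProb_mul_card]
  exact_mod_cast hcard

theorem unifProb_le_div_card_of_leftInverse [Nonempty Ω] [Nonempty α] {P Q : Ω → Prop}
    (F : Ω × α → Ω) (G : Ω → Ω × α) (hQ : ∀ ω a, P ω → Q (F (ω, a)))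
    (hG : ∀ ω a, P ω → G (F (ω, a)) = (ω, a)) :
    unifProb P ≤ unifProb Q / Fintype.card α := by
  have hΩ : (0 : ℝ) < Fintype.card Ω := by positivity
  rw [le_div_iff₀ (by positivity), ← mul_le_mul_iff_left₀ hΩ, mul_assoc,
    mul_comm (Fintype.card α : ℝ)]
  exact unifProb_mul_card_le_of_leftInverse F G hQ hG

theorem unifProb_le_unifProb_prod_of_leftInverse [Nonempty Ω] [Nonempty α] {P : Ω → Prop}
    {Q : Ω × α → Prop} (F G : Ω × α → Ω × α) (hQ : ∀ ω a, P ω → Q (F (ω, a)))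
    (hG : ∀ ω a, P ω → G (F (ω, a)) = (ω, a)) : unifProb P ≤ unifProb Q := by
  have hpos : (0 : ℝ) < Fintype.card Ω * Fintype.card α := by positivity
  have h := unifProb_mul_card_le_of_leftInverse F G hQ hG
  rw [Fintype.card_prod, Nat.cast_mul] at h
  exact le_of_mul_le_mul_right h hpos

theorem unifProb_forall_mem [DecidableEq ι] [Fintype ι] (S : Finset α) :
    unifProb (fun a : ι → α => ∀ i, a i ∈ S) =
      ((S.card : ℝ) / Fintype.card α) ^ Fintype.card ι := by
  have hset : {a : ι → α | ∀ i, a i ∈ S} = Fintype.piFinset fun _ : ι => S := by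
    ext a; simp
  rw [unifProb, hset, Set.ncard_coe_finset, Fintype.card_piFinset, Finset.prod_const,
    Finset.card_univ, Fintype.card_fun, div_pow, Nat.cast_pow, Nat.cast_pow]

end UniformProbability

section BitStrings

/-- The `r`-part of an oracle answer: the `u` bits following the `κ` pointer bits. -/
def ansR {n : ℕ} (u κ : ℕ) (y : Bits n) : Bits u := fun j => bitAt y (κ + (j : ℕ))

/-- The pointer encoded by an oracle answer, as a `0`-based block index. -/
def ansPtr {n : ℕ} (v κ : ℕ) [NeZero v] (y : Bits n) : Fin v := Fin.ofNat v (natOf y κ)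

/-- The answer `y` with its pointer replaced by `b`. -/
def withPtr {n : ℕ} (κ b : ℕ) (y : Bits n) : Bits n :=
  fun j => if (j : ℕ) < κ then b.testBit j else y j

/-- The answer `y` with its `r`-part replaced by `ρ`. -/
def withR {n u : ℕ} (κ : ℕ) (ρ : Bits u) (y : Bits n) : Bits n :=
  fun j => if κ ≤ (j : ℕ) ∧ (j : ℕ) < κ + u then bitAt ρ ((j : ℕ) - κ) else y j

/-- The component `x` of a query `⟨i, x, ρ⟩`. -/
def strX {n : ℕ} (u W : ℕ) (e : Bits n) : Bits u := fun j => bitAt e (W + (j : ℕ))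

/-- The component `ρ` of a query `⟨i, x, ρ⟩`. -/
def strR {n : ℕ} (u W : ℕ) (e : Bits n) : Bits u := fun j => bitAt e (W + u + (j : ℕ))

variable {n u v W κ : ℕ}

theorem card_bits (k : ℕ) : Fintype.card (Bits k) = 2 ^ k := by
  rw [Fintype.card_fun, Fintype.card_bool, Fintype.card_fin]

theorem strX_lineStr (hn : W + 2 * u ≤ n) (i : ℕ) (x ρ : Bits u) :
    strX u W (lineStr n W u i x ρ) = x := by
  funext j
  have hj : W + (j : ℕ) < n := by omega
  simp [strX, bitAt, lineStr, hj]

theorem strR_lineStr (hn : W + 2 * u ≤ n) (i : ℕ) (x ρ : Bits u) :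
    strR u W (lineStr n W u i x ρ) = ρ := by
  funext j
  have hj : W + u + (j : ℕ) < n := by omega
  have hW : ¬W + u + (j : ℕ) < W := by omega
  have hlt : W + u + (j : ℕ) < W + 2 * u := by omega
  have hsub : W + u + (j : ℕ) - W - u = j := by omega
  simp [strR, bitAt, lineStr, hj, hW, hlt, hsub]

theorem eq_of_lineStr_eq_lineStr (hn : W ≤ n) {i i' : ℕ} (hi : i < 2 ^ W)
    (hi' : i' < 2 ^ W) {x ρ x' ρ' : Bits u}
    (h : lineStr n W u i x ρ = lineStr n W u i' x' ρ') : i = i' := by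
  refine Nat.eq_of_testBit_eq fun j => ?_
  rcases lt_or_ge j W with hj | hj
  · simpa [lineStr, hj] using congrFun h ⟨j, by omega⟩
  · have hpow : 2 ^ W ≤ 2 ^ j := Nat.pow_le_pow_right two_pos hj
    rw [Nat.testBit_eq_false_of_lt (hi.trans_le hpow),
      Nat.testBit_eq_false_of_lt (hi'.trans_le hpow)]

theorem natOf_eq_ofBits (y : Bits n) (κ : ℕ) :
    natOf y κ = Nat.ofBits fun j : Fin κ => bitAt y j := by
  suffices h : ∀ f : ℕ → Bool,
      (∑ j ∈ Finset.range κ, if f j then 2 ^ j else 0) = Nat.ofBits fun j : Fin κ => f j from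
    h (bitAt y)
  induction κ with
  | zero => simp
  | succ κ ih =>
    intro f
    have htail := ih fun j => f (j + 1)
    rw [Nat.ofBits_succ, Finset.sum_range_succ']
    refine congrArg₂ (· + ·) ?_ (by cases h : f 0 <;> simp [h])
    refine Eq.trans ?_ (congrArg (2 * ·) htail)
    rw [Finset.mul_sum]
    exact Finset.sum_congr rfl fun j _ => by split_ifs <;> ring

theorem natOf_lt_two_pow (y : Bits n) (κ : ℕ) : natOf y κ < 2 ^ κ :=
  natOf_eq_ofBits y κ ▸ Nat.ofBits_lt_two_pow _

theorem natOf_withPtr (hκ : κ ≤ n) {b : ℕ} (hb : b < 2 ^ κ) (y : Bits n) :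
    natOf (withPtr κ b y) κ = b := by
  rw [natOf_eq_ofBits, ← Nat.mod_eq_of_lt hb, ← Nat.ofBits_testBit]
  congr 1
  funext j
  have hj : (j : ℕ) < n := by omega
  simp [bitAt, withPtr, hj]

theorem withPtr_natOf_withPtr (b : ℕ) (y : Bits n) :
    withPtr κ (natOf y κ) (withPtr κ b y) = y := by
  funext j
  by_cases hj : (j : ℕ) < κ
  · simp [withPtr, hj, natOf_eq_ofBits, Nat.testBit_ofBits_lt, bitAt]
  · simp [withPtr, hj]

theorem ansPtr_withPtr [NeZero v] (hv : v = 2 ^ κ) (hκ : κ ≤ n) (b : Fin v) (y : Bits n) :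
    ansPtr v κ (withPtr κ b y) = b := by
  rw [ansPtr, natOf_withPtr hκ (hv ▸ b.isLt), Fin.ofNat_val_eq_self]

theorem withPtr_ansPtr_withPtr [NeZero v] (hv : v = 2 ^ κ) (b : ℕ) (y : Bits n) :
    withPtr κ (ansPtr v κ y : ℕ) (withPtr κ b y) = y := by
  have hval : (ansPtr v κ y : ℕ) = natOf y κ := Nat.mod_eq_of_lt (hv ▸ natOf_lt_two_pow y κ)
  rw [hval, withPtr_natOf_withPtr]

theorem ansR_withPtr (b : ℕ) (y : Bits n) : ansR u κ (withPtr κ b y) = ansR u κ y := by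
  funext j
  simp [ansR, bitAt, withPtr]

theorem ansR_withR (hn : κ + u ≤ n) (ρ : Bits u) (y : Bits n) :
    ansR u κ (withR κ ρ y) = ρ := by
  funext j
  have hj : κ + (j : ℕ) < n := by omega
  simp [ansR, bitAt, withR, hj]

theorem withR_ansR_withR (ρ : Bits u) (y : Bits n) :
    withR κ (ansR u κ y) (withR κ ρ y) = y := by
  funext j
  by_cases h : κ ≤ (j : ℕ) ∧ (j : ℕ) < κ + u
  · have hadd : κ + ((j : ℕ) - κ) = j := by omega
    have hsub : (j : ℕ) - κ < u := by omega
    simp [withR, h, ansR, bitAt, hadd, hsub]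
  · simp [withR, h]

end BitStrings

section LineChain

variable {n u v W κ : ℕ} [NeZero v]

theorem lineE_zero (RO : Bits n → Bits n) (X : Fin v → Bits u) :
    lineE n u v W κ RO X 0 = lineStr n W u 1 (X 0) fun _ => false := by
  simp [lineE, lineChain, getX, NeZero.pos v]

theorem lineE_succ (RO : Bits n → Bits n) (X : Fin v → Bits u) (k : ℕ) :
    lineE n u v W κ RO X (k + 1) =
      lineStr n W u (k + 2) (X (ansPtr v κ (RO (lineE n u v W κ RO X k))))
        (ansR u κ (RO (lineE n u v W κ RO X k))) := by
  simp only [lineE, lineChain, getX, Nat.mod_mod, Nat.mod_lt _ (NeZero.pos v), dite_true]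
  rfl

theorem exists_lineE_eq_lineStr (RO : Bits n → Bits n) (X : Fin v → Bits u) (k : ℕ) :
    ∃ b ρ, lineE n u v W κ RO X k = lineStr n W u (k + 1) (X b) ρ := by
  cases k with
  | zero => exact ⟨_, _, lineE_zero RO X⟩
  | succ k => exact ⟨_, _, lineE_succ RO X k⟩

theorem lineE_ne_lineE (hn : W ≤ n) (RO RO' : Bits n → Bits n) (X X' : Fin v → Bits u)
    {j j' : ℕ} (hj : j + 1 < 2 ^ W) (hj' : j' + 1 < 2 ^ W) (hne : j ≠ j') :
    lineE n u v W κ RO X j ≠ lineE n u v W κ RO' X' j' := by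
  obtain ⟨b, ρ, hb⟩ := exists_lineE_eq_lineStr (W := W) (κ := κ) RO X j
  obtain ⟨b', ρ', hb'⟩ := exists_lineE_eq_lineStr (W := W) (κ := κ) RO' X' j'
  intro h
  rw [hb, hb'] at h
  exact hne (Nat.succ_injective (eq_of_lineStr_eq_lineStr hn hj hj' h))

theorem lineE_congr {RO RO' : Bits n → Bits n} {X : Fin v → Bits u} (j : ℕ)
    (h : ∀ i < j, RO' (lineE n u v W κ RO X i) = RO (lineE n u v W κ RO X i)) :
    lineE n u v W κ RO' X j = lineE n u v W κ RO X j := by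
  induction j with
  | zero => simp only [lineE_zero]
  | succ j ih => rw [lineE_succ, lineE_succ, ih fun i hi => h i (by omega), h j (by omega)]

end LineChain

section Locality

variable {n s q m : ℕ} {I : Type}

/-- Some machine queries `e` before round `k`; the paper's `e ∈ Q^{(≤ k - 1)}`. -/
def QueriedBefore (A : MPC n s q m I) (RO : Bits n → Bits n) (X : I) (k : ℕ)
    (e : Bits n) : Prop :=
  ∃ k' < k, ∃ i : Fin m, ∃ t < q, mquery A RO X k' i t = e

theorem advAns_congr {RO RO' : Bits n → Bits n} {f : List (Bits n) → Bits n} (t : ℕ)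
    (h : ∀ t' < t, RO' (advQ n RO f t') = RO (advQ n RO f t')) :
    advAns n RO' f t = advAns n RO f t := by
  induction t with
  | zero => rfl
  | succ t ih =>
    rw [advAns, advAns, ih fun t' ht' => h t' (by omega)]
    exact congrArg (fun y => _ ++ [y]) (h t (by omega))

theorem advQ_congr {RO RO' : Bits n → Bits n} {f : List (Bits n) → Bits n} (t : ℕ)
    (h : ∀ t' < t, RO' (advQ n RO f t') = RO (advQ n RO f t')) :
    advQ n RO' f t = advQ n RO f t :=
  congrArg f (advAns_congr t h)

theorem mstate_congr (A : MPC n s q m I) {RO RO' : Bits n → Bits n} (X : I) (k : ℕ)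
    (h : ∀ e, QueriedBefore A RO X k e → RO' e = RO e) :
    mstate A RO' X k = mstate A RO X k := by
  induction k with
  | zero => rfl
  | succ k ih =>
    have hstate : mstate A RO' X k = mstate A RO X k :=
      ih fun e ⟨k', hk', he⟩ => h e ⟨k', by omega, he⟩
    have hans : ∀ i, advAns n RO' (A.qf k i (mstate A RO X k i)) q =
        advAns n RO (A.qf k i (mstate A RO X k i)) q := fun i =>
      advAns_congr q fun t ht => h _ ⟨k, by omega, i, t, ht, rfl⟩
    funext j
    simp only [mstate, hstate, hans]

theorem mquery_congr (A : MPC n s q m I) {RO RO' : Bits n → Bits n} (X : I) {k : ℕ}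
    {i : Fin m} {t : ℕ} (hbefore : ∀ e, QueriedBefore A RO X k e → RO' e = RO e)
    (hround : ∀ t' < t, RO' (mquery A RO X k i t') = RO (mquery A RO X k i t')) :
    mquery A RO' X k i t = mquery A RO X k i t := by
  unfold mquery
  rw [mstate_congr A X k hbefore]
  exact advQ_congr t hround

end Locality

section Skips

variable {n u v W κ s q m : ℕ}

/-- The `t`-th query of machine `i` in round `k` is the chain string number `j + 1`, although the
chain string number `j` was not queried before. -/
def SkipsAt (W κ : ℕ) (A : MPC n s q m (Fin v → Bits u)) (k : ℕ) (i : Fin m) (t j : ℕ)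
    (RO : Bits n → Bits n) (X : Fin v → Bits u) : Prop :=
  mquery A RO X k i t = lineE n u v W κ RO X (j + 1) ∧
    ¬QueriedBefore A RO X k (lineE n u v W κ RO X j) ∧
    ∀ t' < t, mquery A RO X k i t' ≠ lineE n u v W κ RO X j

theorem lineE_update [NeZero v] (hn : W ≤ n) {j : ℕ} (hj : j + 1 < 2 ^ W) (y : Bits n)
    (RO : Bits n → Bits n) (X : Fin v → Bits u) :
    lineE n u v W κ (Function.update RO (lineE n u v W κ RO X j) y) X j =
      lineE n u v W κ RO X j :=
  lineE_congr j fun i hi => Function.update_of_ne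
    (lineE_ne_lineE hn RO RO X X (by omega) (by omega) (by omega)) _ _

theorem mquery_update_of_skipsAt {A : MPC n s q m (Fin v → Bits u)} {k : ℕ} {i : Fin m}
    {t j : ℕ} {RO : Bits n → Bits n} {X : Fin v → Bits u} (h : SkipsAt W κ A k i t j RO X)
    (y : Bits n) :
    mquery A (Function.update RO (lineE n u v W κ RO X j) y) X k i t = mquery A RO X k i t := by
  refine mquery_congr A X (fun e he => ?_) fun t' ht' => Function.update_of_ne (h.2.2 t' ht') _ _
  exact Function.update_of_ne (fun heq => h.2.1 (by rwa [← heq])) _ _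

theorem unifProb_skipsAt_le [NeZero v] (hn : W + 2 * u ≤ n) (hκu : κ + u ≤ n)
    (A : MPC n s q m (Fin v → Bits u)) (k : ℕ) (i : Fin m) (t : ℕ) {j : ℕ}
    (hj : j + 1 < 2 ^ W) :
    unifProb (fun ω : (Bits n → Bits n) × (Fin v → Bits u) =>
      SkipsAt W κ A k i t j ω.1 ω.2) ≤ 1 / 2 ^ u := by
  classical
  let e : (Bits n → Bits n) × (Fin v → Bits u) → Bits n := fun ω => lineE n u v W κ ω.1 ω.2 j
  let setR : (Bits n → Bits n) × (Fin v → Bits u) → Bits u →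
      (Bits n → Bits n) × (Fin v → Bits u) := fun ω ρ =>
    (Function.update ω.1 (e ω) (withR κ ρ (ω.1 (e ω))), ω.2)
  -- Resampling the `r`-part of `RO(e_j)` to `ρ` is undone by reading the old one off the query.
  have hle := unifProb_le_div_card_of_leftInverse (α := Bits u)
    (P := fun ω : (Bits n → Bits n) × (Fin v → Bits u) => SkipsAt W κ A k i t j ω.1 ω.2)
    (Q := fun _ => True) (fun z => setR z.1 z.2)
    (fun ω => (setR ω (strR u W (mquery A ω.1 ω.2 k i t)), ansR u κ (ω.1 (e ω))))
    (fun _ _ _ => trivial) ?_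
  · rw [card_bits, Nat.cast_pow, Nat.cast_ofNat] at hle
    exact hle.trans (by gcongr; exact unifProb_le_one _)
  · rintro ω ρ hω
    have he : e (setR ω ρ) = e ω := lineE_update (by omega) hj _ ω.1 ω.2
    have hquery : strR u W (mquery A (setR ω ρ).1 (setR ω ρ).2 k i t) = ansR u κ (ω.1 (e ω)) := by
      rw [mquery_update_of_skipsAt hω, hω.1, lineE_succ, strR_lineStr hn]
    simp only [hquery]
    simp only [setR] at he ⊢
    simp only [he, Function.update_self, Function.update_idem, withR_ansR_withR, ansR_withR hκu,
      Function.update_eq_self]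

end Skips

section Predictions

variable {ι β C : Type} [DecidableEq ι] [Inhabited β]

/-- The table `X` with all entries outside the list `S` hidden behind `default`. -/
def maskOutside (S : List ι) (X : ι → β) : ι → β := fun b => if b ∈ S then X b else default

/-- The codes in the list, latest first, successively predict entries of `X` at pairwise distinct
positions: `guess c L Y` is the prediction made by `c` for the entry `X (pos c)` after those in
`L`, and it may depend only on the part `Y` of `X` that `L` has predicted. -/
def Predicts (pos : C → ι) (guess : C → List C → (ι → β) → β) (X : ι → β) : List C → Prop
  | [] => True
  | c :: L => Predicts pos guess X L ∧ pos c ∉ L.map pos ∧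
      X (pos c) = guess c L (maskOutside (L.map pos) X)

theorem maskOutside_apply_of_mem {S : List ι} {b : ι} (hb : b ∈ S) (X : ι → β) :
    maskOutside S X b = X b :=
  if_pos hb

theorem maskOutside_congr {S : List ι} {X X' : ι → β} (h : ∀ b ∈ S, X' b = X b) :
    maskOutside S X' = maskOutside S X := by
  funext b
  exact ite_congr rfl (h b) fun _ => rfl

theorem Predicts.congr {pos : C → ι} {guess : C → List C → (ι → β) → β} {X X' : ι → β}
    {L : List C} (hL : Predicts pos guess X L) (h : ∀ b ∈ L.map pos, X' b = X b) :
    Predicts pos guess X' L := by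
  induction L with
  | nil => trivial
  | cons c L ih =>
    rw [List.map_cons, List.forall_mem_cons] at h
    refine ⟨ih hL.1 h.2, hL.2.1, ?_⟩
    rw [h.1, maskOutside_congr h.2]
    exact hL.2.2

variable [Fintype ι] [Fintype β]

theorem unifProb_predicts_le (pos : C → ι) (guess : C → List C → (ι → β) → β) (L : List C) :
    unifProb (fun X => Predicts pos guess X L) ≤ (1 / Fintype.card β) ^ L.length := by
  induction L with
  | nil => simpa using unifProb_le_one _
  | cons c L ih =>
    have hne : ∀ {X : ι → β} {y : β}, pos c ∉ L.map pos →
        ∀ b ∈ L.map pos, Function.update X (pos c) y b = X b := fun hc b hb =>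
      Function.update_of_ne (by rintro rfl; exact hc hb) _ _
    calc unifProb (fun X => Predicts pos guess X (c :: L))
        ≤ unifProb (fun X => Predicts pos guess X L) / Fintype.card β :=
          unifProb_le_div_card_of_leftInverse (fun z => Function.update z.1 (pos c) z.2)
            (fun X =>
              (Function.update X (pos c) (guess c L (maskOutside (L.map pos) X)), X (pos c)))
            (fun X y hX => hX.1.congr (hne hX.2.1)) fun X y hX => by
              simp only [maskOutside_congr (hne hX.2.1), Function.update_idem, ← hX.2.2,
                Function.update_eq_self, Function.update_self]
      _ ≤ (1 / Fintype.card β) ^ L.length / Fintype.card β := by gcongr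
      _ = (1 / Fintype.card β) ^ (c :: L).length := by
          rw [List.length_cons, pow_succ, mul_one_div]

theorem unifProb_exists_predicts_le [Fintype C] (pos : C → ι)
    (guess : C → List C → (ι → β) → β) (t : ℕ) :
    unifProb (fun X => ∃ L : List C, L.length = t ∧ Predicts pos guess X L) ≤
      (Fintype.card C / Fintype.card β) ^ t :=
  calc unifProb (fun X => ∃ L : List C, L.length = t ∧ Predicts pos guess X L)
      ≤ unifProb (fun X => ∃ L : List.Vector C t, Predicts pos guess X L.1) :=
        unifProb_mono fun _ ⟨L, hlen, hL⟩ => ⟨⟨L, hlen⟩, hL⟩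
    _ ≤ Fintype.card (List.Vector C t) * (1 / Fintype.card β) ^ t :=
        unifProb_exists_le fun L => (unifProb_predicts_le pos guess L.1).trans_eq (by rw [L.2])
    _ = (Fintype.card C / Fintype.card β) ^ t := by
        rw [card_vector, Nat.cast_pow, ← mul_pow, mul_one_div]

end Predictions

section OrderedVisits

variable {E : Type} {Q P P' : ℕ → E} {p q : ℕ}

/-- Among its first `q` terms, the query sequence `Q` reaches `P p`, and before any visit to some
`P (c + 1)` with `c < p` it visits `P c`. -/
def VisitsInOrder (Q P : ℕ → E) (p q : ℕ) : Prop :=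
  (∀ c < p, ∀ t < q, Q t = P (c + 1) → ∃ t' < t, Q t' = P c) ∧ ∃ t < q, Q t = P p

theorem VisitsInOrder.congr (h : VisitsInOrder Q P p q) (hP : ∀ c ≤ p, P' c = P c) :
    VisitsInOrder Q P' p q := by
  refine ⟨fun c hc => ?_, ?_⟩
  · rw [hP c hc.le, hP (c + 1) hc]
    exact h.1 c hc
  · rw [hP p le_rfl]
    exact h.2

theorem exists_visit_le_of_visit_add
    (hstep : ∀ c < p, ∀ t < q, Q t = P (c + 1) → ∃ t' < t, Q t' = P c) {c d t : ℕ} (hd : c + d ≤ p)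
    (ht : t < q) (hQ : Q t = P (c + d)) : ∃ t' ≤ t, Q t' = P c := by
  induction d generalizing t with
  | zero => exact ⟨t, le_rfl, hQ⟩
  | succ d ih =>
    obtain ⟨t', ht', hQ'⟩ := hstep (c + d) (by omega) t ht hQ
    obtain ⟨t'', ht'', hQ''⟩ := ih (by omega) (by omega) hQ'
    exact ⟨t'', by omega, hQ''⟩

theorem VisitsInOrder.of_le {p' : ℕ} (h : VisitsInOrder Q P p' q) (hp : p ≤ p') :
    VisitsInOrder Q P p q := by
  obtain ⟨t, ht, hQ⟩ := h.2
  obtain ⟨t', ht', hQ'⟩ := exists_visit_le_of_visit_add h.1 (Nat.add_sub_of_le hp).le ht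
    (hQ.trans (by rw [Nat.add_sub_of_le hp]))
  exact ⟨fun c hc => h.1 c (by omega), t', by omega, hQ'⟩

theorem VisitsInOrder.exists_first (h : VisitsInOrder Q P p q) {c : ℕ} (hc : c ≤ p) :
    ∃ t < q, Q t = P c ∧ ∀ t' < t, ∀ c', c ≤ c' → c' ≤ p → Q t' ≠ P c' := by
  classical
  obtain ⟨t₁, ht₁, hQ₁⟩ := (h.of_le hc).2
  have hex : ∃ t, Q t = P c := ⟨t₁, hQ₁⟩
  have hlt : Nat.find hex < q := (Nat.find_min' hex hQ₁).trans_lt ht₁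
  refine ⟨Nat.find hex, hlt, Nat.find_spec hex, fun t' ht' c' hcc' hc' hQ' => ?_⟩
  obtain ⟨d, rfl⟩ := Nat.exists_eq_add_of_le hcc'
  obtain ⟨t'', ht'', hQ''⟩ := exists_visit_le_of_visit_add h.1 hc' (ht'.trans hlt) hQ'
  exact Nat.find_min hex (ht''.trans_lt ht') hQ''

end OrderedVisits

section Reprogramming

variable {n u v W κ : ℕ}

/-- The oracle `RO` with the pointers in its answers at `pts 0, …, pts (d - 1)` replaced by
`a 0, …, a (d - 1)`. -/
def reprogram (κ : ℕ) (RO : Bits n → Bits n) (pts : ℕ → Bits n) (a : ℕ → Fin v) :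
    ℕ → Bits n → Bits n
  | 0 => RO
  | d + 1 => Function.update (reprogram κ RO pts a d) (pts d) (withPtr κ (a d) (RO (pts d)))

/-- The branch that starts at `E₀`, a chain string with the 1-based index `j + 1`, and follows the
pointers `a 0, a 1, …` instead of those given by the oracle. For `E₀ = lineE n u v W κ RO Y j` this
is `branchE` with the pointer sequence shifted by one. -/
def branchFrom (W κ : ℕ) (RO : Bits n → Bits n) (Y : Fin v → Bits u) (j : ℕ) (E₀ : Bits n)
    (a : ℕ → Fin v) : ℕ → Bits n
  | 0 => E₀
  | c + 1 => lineStr n W u (j + c + 2) (Y (a c)) (ansR u κ (RO (branchFrom W κ RO Y j E₀ a c)))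

/-- The oracle reprogrammed so that the first `d` steps of the chain from `E₀` follow the branch
with pointers `a`. -/
def reprogramBranch (W κ : ℕ) (RO : Bits n → Bits n) (Y : Fin v → Bits u) (j : ℕ) (E₀ : Bits n)
    (a : ℕ → Fin v) (d : ℕ) : Bits n → Bits n :=
  reprogram κ RO (branchFrom W κ RO Y j E₀ a) a d

variable {RO : Bits n → Bits n} {pts pts' : ℕ → Bits n} {a : ℕ → Fin v}

theorem reprogram_apply_eq_of_le {d d' : ℕ} (hd : d ≤ d') {e : Bits n}
    (h : ∀ c, d ≤ c → c < d' → e ≠ pts c) :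
    reprogram κ RO pts a d' e = reprogram κ RO pts a d e := by
  induction d', hd using Nat.le_induction with
  | base => rfl
  | succ d' hd ih =>
    rw [reprogram, Function.update_of_ne (h d' hd d'.lt_succ_self)]
    exact ih fun c hc hc' => h c hc (by omega)

theorem reprogram_apply_of_ne {d : ℕ} {e : Bits n} (h : ∀ c < d, e ≠ pts c) :
    reprogram κ RO pts a d e = RO e :=
  reprogram_apply_eq_of_le (Nat.zero_le d) fun c _ hc => h c hc

theorem reprogram_apply_pts {d c : ℕ} (hc : c < d)
    (h : ∀ c', c < c' → c' < d → pts c ≠ pts c') :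
    reprogram κ RO pts a d (pts c) = withPtr κ (a c) (RO (pts c)) := by
  rw [reprogram_apply_eq_of_le (Nat.succ_le_of_lt hc) fun c' hc' => h c' hc', reprogram,
    Function.update_self]

theorem reprogram_congr {d : ℕ} (h : ∀ c < d, pts' c = pts c) :
    reprogram κ RO pts' a d = reprogram κ RO pts a d := by
  induction d with
  | zero => rfl
  | succ d ih => rw [reprogram, reprogram, ih fun c hc => h c (by omega), h d d.lt_succ_self]

theorem ansR_reprogram (d : ℕ) (e : Bits n) :
    ansR u κ (reprogram κ RO pts a d e) = ansR u κ (RO e) := by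
  induction d with
  | zero => rfl
  | succ d ih =>
    rcases eq_or_ne e (pts d) with rfl | he
    · rw [reprogram, Function.update_self, ansR_withPtr]
    · rw [reprogram, Function.update_of_ne he, ih]

theorem branchFrom_congr {Y Y' : Fin v → Bits u} {j : ℕ} {E₀ : Bits n} {c : ℕ}
    (h : ∀ c' < c, Y' (a c') = Y (a c')) :
    branchFrom W κ RO Y' j E₀ a c = branchFrom W κ RO Y j E₀ a c := by
  induction c with
  | zero => rfl
  | succ c ih => rw [branchFrom, branchFrom, ih fun c' hc' => h c' (by omega), h c c.lt_succ_self]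

theorem reprogramBranch_congr {Y Y' : Fin v → Bits u} {j : ℕ} {E₀ : Bits n} {c : ℕ}
    (h : ∀ c' < c, Y' (a c') = Y (a c')) :
    reprogramBranch W κ RO Y' j E₀ a (c + 1) = reprogramBranch W κ RO Y j E₀ a (c + 1) :=
  reprogram_congr fun _ hd => branchFrom_congr fun c' hc' => h c' (by omega)

end Reprogramming

section FollowedBranches

variable {n u v W κ j p q : ℕ} [NeZero v]

/-- The pointer sequence `a` extended by zeros. -/
def padZero (a : Fin p → Fin v) : ℕ → Fin v := fun c => if h : c < p then a ⟨c, h⟩ else 0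

theorem padZero_val (a : Fin p → Fin v) (c : Fin p) : padZero a c = a c :=
  dif_pos c.isLt

/-- The query algorithm `f`, run on the oracle reprogrammed along the branch `a` from `E₀`, visits
the strings of this branch in order within its first `q` queries. -/
def Follows (W κ j q : ℕ) (f : List (Bits n) → Bits n) (RO : Bits n → Bits n)
    (X : Fin v → Bits u) (E₀ : Bits n) (a : Fin p → Fin v) : Prop :=
  VisitsInOrder (advQ n (reprogramBranch W κ RO X j E₀ (padZero a) p) f)
    (branchFrom W κ RO X j E₀ (padZero a)) p q

/-- Data from which one block of `X` is read off a query: the pointers of a followed branch, the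
number of the query, and the position of the block. -/
abbrev Code (p q v : ℕ) := (Fin p → Fin v) × Fin q × Fin v

/-- The prediction of the block `c.2.2` made by the code `c`: the `x`-part of the query numbered
`c.2.1`. The first code of a list (the last entry) finds the starting string `E₀` in this way, on
the unmodified oracle; all later codes recover `E₀` from it, and run `f` on the oracle
reprogrammed along the branch `c.1` up to the step leading to the block. -/
noncomputable def predictBlock (W κ j : ℕ) (f : List (Bits n) → Bits n) (RO : Bits n → Bits n)
    (c : Code p q v) (L : List (Code p q v)) (Y : Fin v → Bits u) : Bits u :=
  match L.getLast? with
  | none => strX u W (advQ n RO f c.2.1)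
  | some root => strX u W (advQ n (reprogramBranch W κ RO Y j (advQ n RO f root.2.1)
      (padZero c.1) (sInf {d | padZero c.1 d = c.2.2} + 1)) f c.2.1)

/-- The codes in the list predict distinct blocks of `X`, and the query named by the first code
(the last entry) is `E₀`. -/
def PredictsFrom (W κ j : ℕ) (f : List (Bits n) → Bits n) (RO : Bits n → Bits n)
    (X : Fin v → Bits u) (E₀ : Bits n) (L : List (Code p q v)) : Prop :=
  Predicts (fun c => c.2.2) (predictBlock W κ j f RO) X L ∧
    ∃ root, L.getLast? = some root ∧ advQ n RO f root.2.1 = E₀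

variable {f : List (Bits n) → Bits n} {RO : Bits n → Bits n} {X : Fin v → Bits u} {E₀ : Bits n}
  {a : Fin p → Fin v}

-- Up to the first visit to `branchFrom … c`, reprogramming beyond step `c` remains unnoticed.
theorem Follows.exists_advQ_eq (h : Follows W κ j q f RO X E₀ a) {c : ℕ} (hc : c ≤ p) :
    ∃ t < q, advQ n (reprogramBranch W κ RO X j E₀ (padZero a) c) f t =
      branchFrom W κ RO X j E₀ (padZero a) c := by
  obtain ⟨t, ht, hQ, hfirst⟩ := h.exists_first hc
  refine ⟨t, ht, Eq.trans (advQ_congr t fun t' ht' => ?_) hQ⟩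
  exact (reprogram_apply_eq_of_le hc fun c' hcc' hc' => hfirst t' ht' c' hcc' hc'.le).symm

theorem Follows.exists_predictsFrom_singleton (hn : W + 2 * u ≤ n)
    (hE₀ : ∃ i b ρ, E₀ = lineStr n W u i (X b) ρ) (h : Follows W κ j q f RO X E₀ a) :
    ∃ c : Code p q v, PredictsFrom W κ j f RO X E₀ [c] := by
  obtain ⟨t, ht, hQ⟩ := h.exists_advQ_eq (Nat.zero_le p)
  obtain ⟨i, b, ρ, hb⟩ := hE₀
  have hroot : advQ n RO f t = E₀ := hQ
  refine ⟨(a, ⟨t, ht⟩, b), ⟨trivial, by simp, ?_⟩, _, rfl, hroot⟩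
  change X b = strX u W (advQ n RO f t)
  rw [hroot, hb, strX_lineStr hn]

theorem Follows.exists_predictsFrom_cons (hn : W + 2 * u ≤ n) {L : List (Code p q v)}
    (hL : PredictsFrom W κ j f RO X E₀ L) (h : Follows W κ j q f RO X E₀ a)
    (hnew : ∃ c, a c ∉ L.map fun c => c.2.2) :
    ∃ c : Code p q v, PredictsFrom W κ j f RO X E₀ (c :: L) := by
  classical
  obtain ⟨hval, root, hroot, hquery⟩ := hL
  have hex : ∃ d < p, padZero a d ∉ L.map fun c => c.2.2 :=
    let ⟨c, hc⟩ := hnew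
    ⟨c, c.isLt, by rwa [padZero_val]⟩
  obtain ⟨hd, hdL⟩ := Nat.find_spec hex
  set d := Nat.find hex
  have hmem : ∀ d' < d, padZero a d' ∈ L.map fun c => c.2.2 := fun d' hd' => by
    by_contra hcon
    exact Nat.find_min hex hd' ⟨hd'.trans hd, hcon⟩
  have hinf : sInf {d' | padZero a d' = padZero a d} = d :=
    IsLeast.csInf_eq ⟨rfl, fun d' hd' => not_lt.1 fun hlt => hdL (hd' ▸ hmem d' hlt)⟩
  have hmask : reprogramBranch W κ RO (maskOutside (L.map fun c => c.2.2) X) j E₀ (padZero a)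
      (d + 1) = reprogramBranch W κ RO X j E₀ (padZero a) (d + 1) :=
    reprogramBranch_congr fun d' hd' => maskOutside_apply_of_mem (hmem d' hd') X
  obtain ⟨t, ht, hQ⟩ := h.exists_advQ_eq (Nat.succ_le_of_lt hd)
  refine ⟨(a, ⟨t, ht⟩, padZero a d), ⟨hval, hdL, ?_⟩, root, by simp [List.getLast?_cons, hroot],
    hquery⟩
  simp only [predictBlock, hroot, hquery, hinf, hmask, hQ, branchFrom, strX_lineStr hn]

theorem exists_finset_or_predictsFrom (hn : W + 2 * u ≤ n)
    (hE₀ : ∃ i b ρ, E₀ = lineStr n W u i (X b) ρ) (t : ℕ) :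
    (∃ S : Finset (Fin v), S.card ≤ t ∧
      ∀ a : Fin p → Fin v, Follows W κ j q f RO X E₀ a → ∀ c, a c ∈ S) ∨
    ∃ L : List (Code p q v), L.length = t + 1 ∧ PredictsFrom W κ j f RO X E₀ L := by
  induction t with
  | zero =>
    by_cases hex : ∃ a : Fin p → Fin v, Follows W κ j q f RO X E₀ a
    · obtain ⟨a, ha⟩ := hex
      obtain ⟨c, hc⟩ := ha.exists_predictsFrom_singleton hn hE₀
      exact Or.inr ⟨[c], rfl, hc⟩
    · exact Or.inl ⟨∅, by simp, fun a ha => absurd ⟨a, ha⟩ hex⟩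
  | succ t ih =>
    obtain ⟨S, hS, hmem⟩ | ⟨L, hlen, hL⟩ := ih
    · exact Or.inl ⟨S, by omega, hmem⟩
    by_cases hclosed : ∀ a : Fin p → Fin v, Follows W κ j q f RO X E₀ a →
        ∀ c, a c ∈ L.map fun c => c.2.2
    · refine Or.inl ⟨(L.map fun c => c.2.2).toFinset, ?_, fun a ha c => ?_⟩
      · exact (List.toFinset_card_le _).trans (by simp [hlen])
      · exact List.mem_toFinset.2 (hclosed a ha c)
    · push Not at hclosed
      obtain ⟨a, ha, hnew⟩ := hclosed
      obtain ⟨c, hc⟩ := ha.exists_predictsFrom_cons hn hL hnew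
      exact Or.inr ⟨c :: L, by simp [hlen], hc⟩

theorem unifProb_follows_le (hn : W + 2 * u ≤ n) (hE₀ : ∃ i b ρ, E₀ = lineStr n W u i (X b) ρ)
    {t : ℕ} (h : ¬∃ L : List (Code p q v), L.length = t + 1 ∧
      Predicts (fun c => c.2.2) (predictBlock W κ j f RO) X L) :
    unifProb (fun a : Fin p → Fin v => Follows W κ j q f RO X E₀ a) ≤ ((t : ℝ) / v) ^ p := by
  obtain ⟨S, hS, hmem⟩ | ⟨L, hlen, hL⟩ := exists_finset_or_predictsFrom hn hE₀ t
  · calc unifProb (fun a : Fin p → Fin v => Follows W κ j q f RO X E₀ a)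
        ≤ unifProb (fun a : Fin p → Fin v => ∀ c, a c ∈ S) := unifProb_mono hmem
      _ = ((S.card : ℝ) / v) ^ p := by
          rw [unifProb_forall_mem, Fintype.card_fin, Fintype.card_fin]
      _ ≤ ((t : ℝ) / v) ^ p := by gcongr
  · exact absurd ⟨L, hlen, hL.1⟩ h

theorem unifProb_exists_predictBlock_le (W κ j : ℕ) (f : List (Bits n) → Bits n)
    (RO : Bits n → Bits n) (t : ℕ) :
    unifProb (fun X : Fin v → Bits u => ∃ L : List (Code p q v), L.length = t ∧
      Predicts (fun c => c.2.2) (predictBlock W κ j f RO) X L) ≤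
      ((v : ℝ) ^ p * (q * v) / 2 ^ u) ^ t := by
  simpa using unifProb_exists_predicts_le (fun c : Code p q v => c.2.2)
    (predictBlock (u := u) W κ j f RO) t

end FollowedBranches

section Rerouting

variable {n u v W κ j p : ℕ} [NeZero v]

/-- The pointers in the answers to the chain strings number `j, …, j + p - 1`. -/
def chainPtrs (W κ j p : ℕ) (RO : Bits n → Bits n) (X : Fin v → Bits u) : Fin p → Fin v :=
  fun c => ansPtr v κ (RO (lineE n u v W κ RO X (j + c)))

/-- The oracle `RO` with the pointers `chainPtrs` along its own chain replaced by `a`. -/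
def reroute (W κ j : ℕ) (RO : Bits n → Bits n) (X : Fin v → Bits u) (a : Fin p → Fin v) :
    Bits n → Bits n :=
  reprogram κ RO (fun c => lineE n u v W κ RO X (j + c)) (padZero a) p

variable (RO : Bits n → Bits n) (X : Fin v → Bits u) (a : Fin p → Fin v)

theorem lineE_reroute (hn : W ≤ n) (hj : j + p < 2 ^ W) :
    lineE n u v W κ (reroute W κ j RO X a) X j = lineE n u v W κ RO X j :=
  lineE_congr j fun _ _ => reprogram_apply_of_ne fun _ _ =>
    lineE_ne_lineE hn RO RO X X (by omega) (by omega) (by omega)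

theorem branchFrom_reroute (hn : W ≤ n) (hj : j + p < 2 ^ W) {c : ℕ} (hc : c ≤ p) :
    branchFrom W κ (reroute W κ j RO X a) X j (lineE n u v W κ (reroute W κ j RO X a) X j)
      (padZero (chainPtrs W κ j p RO X)) c = lineE n u v W κ RO X (j + c) := by
  induction c with
  | zero => exact lineE_reroute RO X a hn hj
  | succ c ih =>
    have hptr : padZero (chainPtrs W κ j p RO X) c =
        ansPtr v κ (RO (lineE n u v W κ RO X (j + c))) :=
      padZero_val (chainPtrs W κ j p RO X) ⟨c, hc⟩
    rw [branchFrom, ih (Nat.le_of_succ_le hc), ← add_assoc, lineE_succ, reroute, ansR_reprogram,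
      hptr]

theorem reroute_lineE (hn : W ≤ n) (hj : j + p < 2 ^ W) (c : Fin p) :
    reroute W κ j RO X a (lineE n u v W κ RO X (j + c)) =
      withPtr κ (a c) (RO (lineE n u v W κ RO X (j + c))) := by
  have h := reprogram_apply_pts (κ := κ) (RO := RO) (a := padZero a)
    (pts := fun c => lineE n u v W κ RO X (j + c)) c.isLt fun c' hc hc' =>
    lineE_ne_lineE hn RO RO X X (by omega) (by omega) (by omega)
  rwa [padZero_val] at h

theorem reprogramBranch_reroute (hv : v = 2 ^ κ) (hn : W ≤ n) (hj : j + p < 2 ^ W) :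
    reprogramBranch W κ (reroute W κ j RO X a) X j
      (lineE n u v W κ (reroute W κ j RO X a) X j) (padZero (chainPtrs W κ j p RO X)) p = RO := by
  rw [reprogramBranch, reprogram_congr fun c hc => branchFrom_reroute RO X a hn hj hc.le]
  funext e
  by_cases h : ∃ c : Fin p, e = lineE n u v W κ RO X (j + c)
  · obtain ⟨c, rfl⟩ := h
    rw [reprogram_apply_pts (pts := fun c => lineE n u v W κ RO X (j + c)) c.isLt fun c' hc hc' =>
        lineE_ne_lineE hn RO RO X X (by omega) (by omega) (by omega),
      reroute_lineE RO X a hn hj, padZero_val, chainPtrs, withPtr_ansPtr_withPtr hv]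
  · push Not at h
    have hne : ∀ c < p, e ≠ lineE n u v W κ RO X (j + c) := fun c hc => h ⟨c, hc⟩
    rw [reprogram_apply_of_ne hne, reroute, reprogram_apply_of_ne hne]

end Rerouting

section Rounds

variable {n u v W κ s q m j p k : ℕ} {i : Fin m}

/-- In round `k`, machine `i` visits the chain strings number `j, …, j + p` in order, and all but
the last of them had not been queried before. -/
def Advances (W κ : ℕ) (A : MPC n s q m (Fin v → Bits u)) (j p k : ℕ) (i : Fin m)
    (RO : Bits n → Bits n) (X : Fin v → Bits u) : Prop :=
  (∀ c < p, ¬QueriedBefore A RO X k (lineE n u v W κ RO X (j + c))) ∧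
    VisitsInOrder (mquery A RO X k i) (fun c => lineE n u v W κ RO X (j + c)) p q

variable {A : MPC n s q m (Fin v → Bits u)} {RO : Bits n → Bits n} {X : Fin v → Bits u}

theorem Advances.follows_reroute [NeZero v] (h : Advances W κ A j p k i RO X) (hv : v = 2 ^ κ)
    (hn : W ≤ n) (hj : j + p < 2 ^ W) (a : Fin p → Fin v) :
    Follows W κ j q (A.qf k i (mstate A (reroute W κ j RO X a) X k i)) (reroute W κ j RO X a) X
      (lineE n u v W κ (reroute W κ j RO X a) X j) (chainPtrs W κ j p RO X) := by
  have hstate : mstate A (reroute W κ j RO X a) X k = mstate A RO X k :=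
    mstate_congr A X k fun e he => reprogram_apply_of_ne fun c hc heq => h.1 c hc (heq ▸ he)
  rw [Follows, reprogramBranch_reroute RO X a hv hn hj, hstate]
  exact h.2.congr fun c hc => branchFrom_reroute RO X a hn hj hc

theorem unifProb_advances_le_unifProb_follows [NeZero v] (A : MPC n s q m (Fin v → Bits u))
    (k : ℕ) (i : Fin m) (hv : v = 2 ^ κ) (hn : W ≤ n) (hκ : κ ≤ n) (hj : j + p < 2 ^ W) :
    unifProb (fun ω : (Bits n → Bits n) × (Fin v → Bits u) => Advances W κ A j p k i ω.1 ω.2) ≤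
      unifProb (fun z : ((Bits n → Bits n) × (Fin v → Bits u)) × (Fin p → Fin v) =>
        Follows W κ j q (A.qf k i (mstate A z.1.1 z.1.2 k i)) z.1.1 z.1.2
          (lineE n u v W κ z.1.1 z.1.2 j) z.2) := by
  let restore : ((Bits n → Bits n) × (Fin v → Bits u)) × (Fin p → Fin v) → Bits n → Bits n :=
    fun z => reprogramBranch W κ z.1.1 z.1.2 j (lineE n u v W κ z.1.1 z.1.2 j) (padZero z.2) p
  -- Exchanging the pointers along the chain with the independent ones in `a` is invertible.
  refine unifProb_le_unifProb_prod_of_leftInverse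
    (fun z => ((reroute W κ j z.1.1 z.1.2 z.2, z.1.2), chainPtrs W κ j p z.1.1 z.1.2))
    (fun z => ((restore z, z.1.2),
      fun c => ansPtr v κ (z.1.1 (lineE n u v W κ (restore z) z.1.2 (j + c)))))
    (fun ω a h => h.follows_reroute hv hn hj a) ?_
  rintro ⟨RO, X⟩ a -
  simp only [restore, reprogramBranch_reroute RO X a hv hn hj, reroute_lineE RO X a hn hj,
    ansPtr_withPtr hv hκ]

theorem unifProb_exists_state_predicts_le [NeZero v] (A : MPC n s q m (Fin v → Bits u)) (W κ : ℕ)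
    (j p k : ℕ) (i : Fin m) (t : ℕ) :
    unifProb (fun ω : (Bits n → Bits n) × (Fin v → Bits u) =>
      ∃ M, ∃ L : List (Code p q v), L.length = t ∧
        Predicts (fun c => c.2.2) (predictBlock W κ j (A.qf k i M) ω.1) ω.2 L) ≤
      2 ^ s * ((v : ℝ) ^ p * (q * v) / 2 ^ u) ^ t := by
  have hM : ∀ M : Bits s, unifProb (fun ω : (Bits n → Bits n) × (Fin v → Bits u) =>
      ∃ L : List (Code p q v), L.length = t ∧
        Predicts (fun c => c.2.2) (predictBlock W κ j (A.qf k i M) ω.1) ω.2 L) ≤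
      ((v : ℝ) ^ p * (q * v) / 2 ^ u) ^ t := fun M =>
    have hRO := fun RO : Bits n → Bits n =>
      unifProb_exists_predictBlock_le (u := u) (v := v) (p := p) (q := q) W κ j (A.qf k i M) RO t
    (unifProb_prod_le (by positivity) hRO :)
  have hexists := unifProb_exists_le hM
  rwa [card_bits, Nat.cast_pow, Nat.cast_ofNat] at hexists

theorem unifProb_advances_le [NeZero v] (A : MPC n s q m (Fin v → Bits u)) (k : ℕ) (i : Fin m)
    (hv : v = 2 ^ κ) (hn : W + 2 * u ≤ n) (hκ : κ ≤ n) (hj : j + p < 2 ^ W) (t : ℕ) :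
    unifProb (fun ω : (Bits n → Bits n) × (Fin v → Bits u) => Advances W κ A j p k i ω.1 ω.2) ≤
      2 ^ s * ((v : ℝ) ^ p * (q * v) / 2 ^ u) ^ (t + 1) + ((t : ℝ) / v) ^ p := by
  refine (unifProb_advances_le_unifProb_follows A k i hv (by omega) hκ hj).trans ?_
  have hfollows : ∀ ω : (Bits n → Bits n) × (Fin v → Bits u),
      (¬∃ M, ∃ L : List (Code p q v), L.length = t + 1 ∧
        Predicts (fun c => c.2.2) (predictBlock W κ j (A.qf k i M) ω.1) ω.2 L) →
      unifProb (fun a : Fin p → Fin v => Follows W κ j q (A.qf k i (mstate A ω.1 ω.2 k i))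
        ω.1 ω.2 (lineE n u v W κ ω.1 ω.2 j) a) ≤ ((t : ℝ) / v) ^ p := fun ω hω =>
    unifProb_follows_le hn ⟨j + 1, exists_lineE_eq_lineStr ω.1 ω.2 j⟩ fun hL => hω ⟨_, hL⟩
  have hprod := unifProb_prod_le_add (by positivity) hfollows
  exact hprod.trans (add_le_add (unifProb_exists_state_predicts_le A W κ j p k i (t + 1)) le_rfl)

theorem Advances.of_mquery_eq_lineE {N p' t : ℕ}
    (hfresh : ∀ j', j ≤ j' → j' ≤ N → ¬QueriedBefore A RO X k (lineE n u v W κ RO X j'))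
    (hskip : ∀ t < q, ∀ j' < N, ¬SkipsAt W κ A k i t j' RO X) (hp : p ≤ p') (hN : j + p' ≤ N)
    (ht : t < q) (hQ : mquery A RO X k i t = lineE n u v W κ RO X (j + p')) :
    Advances W κ A j p k i RO X := by
  have hvisits :
      VisitsInOrder (mquery A RO X k i) (fun c => lineE n u v W κ RO X (j + c)) p' q := by
    refine ⟨fun c hc t ht hQ => ?_, t, ht, hQ⟩
    by_contra! hno
    exact hskip t ht (j + c) (by omega) ⟨hQ, hfresh _ (by omega) (by omega), hno⟩
  exact ⟨fun c hc => hfresh _ (by omega) (by omega), hvisits.of_le hp⟩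

theorem exists_advances_or_skipsAt {N R j' : ℕ} (hRj : R * p ≤ j') (hjN : j' ≤ N)
    (h : QueriedBefore A RO X R (lineE n u v W κ RO X j')) :
    ∃ k < R, ∃ i : Fin m, Advances W κ A (k * p) p k i RO X ∨
      ∃ t < q, ∃ j < N, SkipsAt W κ A k i t j RO X := by
  induction R generalizing j' with
  | zero => obtain ⟨k, hk, -⟩ := h; omega
  | succ R ih =>
    rw [Nat.succ_mul] at hRj
    by_contra! hcon
    have hfresh : ∀ j', R * p ≤ j' → j' ≤ N →
        ¬QueriedBefore A RO X R (lineE n u v W κ RO X j') := fun j' hj' hj'N hq =>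
      let ⟨k, hk, i, hor⟩ := ih hj' hj'N hq
      let ⟨hadv, hskip⟩ := hcon k (by omega) i
      hor.elim hadv fun ⟨t, ht, j, hj, hs⟩ => hskip t ht j hj hs
    obtain ⟨k, hk, i, t, ht, hQ⟩ := h
    rcases Nat.lt_succ_iff_lt_or_eq.1 hk with hk | rfl
    · exact hfresh j' (by omega) hjN ⟨k, hk, i, t, ht, hQ⟩
    · obtain ⟨p', rfl⟩ := Nat.exists_eq_add_of_le (Nat.le_of_add_right_le hRj)
      obtain ⟨hadv, hskip⟩ := hcon k k.lt_succ_self i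
      exact hadv (.of_mquery_eq_lineE hfresh hskip (by omega) hjN ht hQ)

theorem unifProb_queriedBefore_lineE_le (A : MPC n s q m (Fin v → Bits u)) (hv : v = 2 ^ κ)
    (hn : W + 2 * u ≤ n) (hκu : κ + u ≤ n) {R N : ℕ} (hN : N < 2 ^ W) (hR : R * p ≤ N) (t : ℕ) :
    unifProb (fun ω : (Bits n → Bits n) × (Fin v → Bits u) =>
      QueriedBefore A ω.1 ω.2 R (lineE n u v W κ ω.1 ω.2 N)) ≤
      R * (m * (2 ^ s * ((v : ℝ) ^ p * (q * v) / 2 ^ u) ^ (t + 1) + ((t : ℝ) / v) ^ p +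
        q * (N * (1 / 2 ^ u)))) := by
  have : NeZero v := ⟨by rw [hv]; positivity⟩
  refine (unifProb_mono fun ω h => exists_advances_or_skipsAt hR le_rfl h).trans ?_
  refine unifProb_exists_lt_le fun k hk => ?_
  have hkp : k * p + p ≤ R * p := (Nat.succ_mul k p).symm.trans_le (Nat.mul_le_mul_right p hk)
  refine (unifProb_exists_le fun i => (unifProb_or_le _ _).trans (add_le_add ?_ ?_)).trans_eq
    (by rw [Fintype.card_fin])
  · exact unifProb_advances_le A k i hv hn (by omega) (by omega) t
  · exact unifProb_exists_lt_le fun t _ => unifProb_exists_lt_le fun j hj =>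
      unifProb_skipsAt_le hn hκu A k i t (by omega)

end Rounds

section Exponents

theorem one_le_ceil_logb_sq {w : ℕ} (hw : 2 ≤ w) : 1 ≤ ⌈Real.logb 2 w ^ 2⌉₊ :=
  Nat.ceil_pos.2 (pow_pos (Real.logb_pos one_lt_two (by exact_mod_cast hw)) 2)

theorem succ_mul_le_of_le_div_sub_one {R p w : ℕ} (hp : 1 ≤ p) (hR : (R : ℝ) ≤ w / p - 1) :
    (R + 1) * p ≤ w := by
  have hpos : (0 : ℝ) < p := by exact_mod_cast hp
  rw [le_sub_iff_add_le, le_div_iff₀ hpos] at hR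
  exact_mod_cast hR

theorem two_rpow_neg_sub_logb {u v q : ℝ} (p : ℕ) (hv : 0 < v) (hq : 0 < q) :
    (2 : ℝ) ^ (-(u - (p + 2) * Real.logb 2 v - Real.logb 2 q)) =
      v ^ (p + 2) * q * 2 ^ (-u) := by
  have hexp : -(u - (p + 2) * Real.logb 2 v - Real.logb 2 q) =
      Real.logb 2 v * (p + 2 : ℕ) + Real.logb 2 q + -u := by
    push_cast
    ring
  rw [hexp, Real.rpow_add two_pos, Real.rpow_add two_pos, Real.rpow_mul_natCast two_pos.le,
    Real.rpow_logb two_pos (by norm_num) hv, Real.rpow_logb two_pos (by norm_num) hq]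

theorem two_rpow_mul_pow_le {s Δ β : ℝ} {t : ℕ} (hΔ : 0 < Δ) (hβ : 0 ≤ β)
    (hβΔ : β ≤ 2 ^ (-Δ)) (ht : s / Δ + 1 ≤ t) : 2 ^ s * β ^ t ≤ 2 ^ (-Δ) := by
  have hs : s + Δ ≤ t * Δ := by
    have hmul := mul_le_mul_of_nonneg_right ht hΔ.le
    rwa [add_mul, div_mul_cancel₀ _ hΔ.ne', one_mul] at hmul
  calc 2 ^ s * β ^ t ≤ 2 ^ s * ((2 : ℝ) ^ (-Δ)) ^ t := by gcongr
    _ = 2 ^ (s + -Δ * t) := by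
        rw [← Real.rpow_mul_natCast two_pos.le, ← Real.rpow_add two_pos]
    _ ≤ 2 ^ (-Δ) := Real.rpow_le_rpow_of_exponent_le one_le_two (by linarith)

theorem two_pow_mul_pow_floor_le {u s p : ℕ} {v q h : ℝ} (hv : 1 ≤ v) (hq : 0 < q)
    (hu : (p + 2) * Real.logb 2 v + Real.logb 2 q < u)
    (hh : h = s / (u - (p + 2) * Real.logb 2 v - Real.logb 2 q) + 1) :
    2 ^ s * (v ^ p * (q * v) / 2 ^ u) ^ (⌊h⌋₊ + 1) ≤
      2 ^ (-(u - (p + 2) * Real.logb 2 v - Real.logb 2 q)) := by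
  have hΔeq := two_rpow_neg_sub_logb (u := u) p (one_pos.trans_le hv) hq
  have hΔ : 0 < u - (p + 2) * Real.logb 2 v - Real.logb 2 q := by linarith
  set Δ := u - (p + 2) * Real.logb 2 v - Real.logb 2 q
  have hβ : v ^ p * (q * v) / 2 ^ u ≤ 2 ^ (-Δ) := by
    rw [hΔeq, Real.rpow_neg two_pos.le, Real.rpow_natCast, ← div_eq_mul_inv, mul_comm q,
      ← mul_assoc, ← pow_succ]
    gcongr
    exact one_le_two
  have ht : s / Δ + 1 ≤ (⌊h⌋₊ + 1 : ℕ) := by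
    rw [← hh]
    exact_mod_cast (Nat.lt_floor_add_one h).le
  have hle := two_rpow_mul_pow_le hΔ (by positivity) hβ ht
  rwa [Real.rpow_natCast] at hle

end Exponents

theorem stmt17_general {n u v w κ p W s q m R : ℕ} (hp : 1 ≤ p) (hv : v = 2 ^ κ) (hW : w < 2 ^ W)
    (hn : W + 2 * u ≤ n) (hκu : κ + u ≤ n) (hq : 1 ≤ q)
    (hu : ((p : ℝ) + 2) * Real.logb 2 v + Real.logb 2 q < (u : ℝ)) {h : ℝ}
    (hh : h = (s : ℝ) / ((u : ℝ) - ((p : ℝ) + 2) * Real.logb 2 v - Real.logb 2 q) + 1)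
    (A : MPC n s q m (Fin v → Bits u)) (hR : (R : ℝ) ≤ (w : ℝ) / (p : ℝ) - 1) :
    unifProb (fun ω : (Bits n → Bits n) × (Fin v → Bits u) =>
      QueriedBefore A ω.1 ω.2 R (lineE n u v W κ ω.1 ω.2 (w - 1))) ≤
    (R : ℝ) * (m : ℝ) *
      ((h / (v : ℝ)) ^ p + (w : ℝ) * q * (v : ℝ) ^ p * (2 : ℝ) ^ (-(u : ℝ)) +
        (w : ℝ) *
          (2 : ℝ) ^ (-((u : ℝ) - ((p : ℝ) + 2) * Real.logb 2 v - Real.logb 2 q))) := by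
  have hRp : R * p + p ≤ w := R.succ_mul p ▸ succ_mul_le_of_le_div_sub_one hp hR
  have hv1 : (1 : ℝ) ≤ v := by exact_mod_cast hv ▸ Nat.one_le_two_pow
  have hw1 : (1 : ℝ) ≤ w := by exact_mod_cast (show 1 ≤ w by omega)
  have hq0 : (0 : ℝ) < q := by exact_mod_cast hq
  have hpredict := (two_pow_mul_pow_floor_le hv1 hq0 hu hh).trans
    (le_mul_of_one_le_left (by positivity) hw1)
  have hguess : ((⌊h⌋₊ : ℝ) / v) ^ p ≤ (h / v) ^ p := by
    have hh0 : 0 ≤ h := hh ▸ add_nonneg (div_nonneg s.cast_nonneg (by linarith)) zero_le_one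
    gcongr
    exact Nat.floor_le hh0
  have hskip : q * (((w - 1 : ℕ) : ℝ) * (1 / 2 ^ u)) ≤ w * q * v ^ p * 2 ^ (-(u : ℝ)) :=
    calc q * (((w - 1 : ℕ) : ℝ) * (1 / 2 ^ u)) ≤ q * (w * (1 / 2 ^ u)) := by
          gcongr
          exact Nat.sub_le w 1
      _ = w * q * 1 * 2 ^ (-(u : ℝ)) := by
          rw [Real.rpow_neg two_pos.le, Real.rpow_natCast]
          ring
      _ ≤ w * q * v ^ p * 2 ^ (-(u : ℝ)) := by
          gcongr
          exact one_le_pow₀ hv1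
  refine (unifProb_queriedBefore_lineE_le (p := p) A hv hn hκu
    ((Nat.sub_le w 1).trans_lt hW) (by omega) ⌊h⌋₊).trans ?_
  rw [mul_assoc]
  gcongr _ * (_ * ?_)
  linarith

/-- **Lemma 3.2 (quantitative form, up to an absolute constant `K`).**
In the Line setting with `u > (p+2)·log₂ v + log₂ q` and
`h := s/(u − (p+2)·log₂ v − log₂ q) + 1`, for every deterministic MPC algorithm and
every number of rounds `R` with `1 ≤ R ≤ w/p − 1`, the probability over uniformly random
`(RO, X)` that some machine queries the final Line string `e_w` during the first `R`
rounds (rounds `0, …, R−1`) is at most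
`K·R·m·((h/v)^p + w·q·v^p·2^(−u) + w·2^(−(u − (p+2)·log₂ v − log₂ q)))`.
(Here `lineE … (w−1)` is the paper's `e_w`.) -/
theorem stmt17 : ∃ K : ℝ, 0 < K ∧
    ∀ (n u v w κ p W s q m : ℕ),
    1 ≤ u → 2 ≤ w → 1 ≤ κ → v = 2 ^ κ →
    p = ⌈(Real.logb 2 w) ^ 2⌉₊ → W = Nat.clog 2 (w + p + 2) →
    W + 2 * u ≤ n → κ + u ≤ n → 1 ≤ q → 1 ≤ m →
    ((p : ℝ) + 2) * Real.logb 2 v + Real.logb 2 q < (u : ℝ) →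
    ∀ h : ℝ, h = (s : ℝ) / ((u : ℝ) - ((p : ℝ) + 2) * Real.logb 2 v - Real.logb 2 q) + 1 →
    ∀ (A : MPC n s q m (Fin v → Bits u)) (R : ℕ), 1 ≤ R → (R : ℝ) ≤ (w : ℝ) / (p : ℝ) - 1 →
    unifProb (fun ω : (Bits n → Bits n) × (Fin v → Bits u) =>
      ∃ k ≤ R - 1, ∃ i : Fin m, ∃ t < q,
        mquery A ω.1 ω.2 k i t = lineE n u v W κ ω.1 ω.2 (w - 1)) ≤
    K * (R : ℝ) * (m : ℝ) *
      ((h / (v : ℝ)) ^ p + (w : ℝ) * q * (v : ℝ) ^ p * (2 : ℝ) ^ (-(u : ℝ)) +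
        (w : ℝ) *
          (2 : ℝ) ^ (-((u : ℝ) - ((p : ℝ) + 2) * Real.logb 2 v - Real.logb 2 q))) :=
  ⟨1, one_pos, fun n u v w κ p W s q m _ hw _ hv hp hW hn hκu hq _ hu h hh A R hR hRw => by
    have hwW : w < 2 ^ W := hW ▸ (by omega : w < w + p + 2).trans_le (Nat.le_pow_clog one_lt_two _)
    simpa only [one_mul, QueriedBefore, Nat.lt_iff_le_pred hR] using
      stmt17_general (hp ▸ one_le_ceil_logb_sq hw) hv hwW hn hκu hq hu hh A hRw⟩
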